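/- There exists a function f : [0,1] → ℝ which is Hölder continuous of every exponent α ∈ (0,1), which does not have the strong Sard property (i.e. L¹(f(S)) > 0, where S is the critical set of f), but which has the relaxed Sard property (i.e. f_#(𝟙_S L¹) ⊥ L¹). -/

import Mathlib

/-!
The function is the quantile function `f` of a discrete probability measure `μ` on `[0, 1]`.
Lebesgue measure on `[0, 1]` is pushed forward by `f` to `μ`, which is singular; this gives the
relaxed Sard property. It also defeats the strong one: almost every point of `[0, 1]` is sent to
the Lebesgue-null set carrying `μ`, and on the remaining null set `f` can create measure only where
it is not differentiable, so the image of the critical set has the full measure of `f([0, 1])`.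

As `f` is monotone, `μ (f p, f q) ≤ q - p`. Hence `f` is `α`-Hölder as soon as every interval
of length `ℓ` has `μ`-mass at least `c ℓ ^ (1 / α)`. A mixture of uniform measures on the dyadic
grids with subexponentially decaying weights satisfies this for every `α < 1`.
-/

open MeasureTheory Set

noncomputable section

/-- The critical set of `f : [0,1] → ℝ`: points of `[0,1]` where `f` is either not
differentiable or has zero derivative. -/
def critSet1 (f : ℝ → ℝ) : Set ℝ :=
  {x | x ∈ Set.Icc (0:ℝ) 1 ∧
    (¬ DifferentiableWithinAt ℝ f (Set.Icc (0:ℝ) 1) x ∨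
      derivWithin f (Set.Icc (0:ℝ) 1) x = 0)}

/-- `f` is Hölder continuous of exponent `α` on `[0,1]`. -/
def HolderOnUnit (f : ℝ → ℝ) (α : ℝ) : Prop :=
  ∃ C : ℝ, ∀ x ∈ Set.Icc (0:ℝ) 1, ∀ y ∈ Set.Icc (0:ℝ) 1, |f x - f y| ≤ C * |x - y| ^ α

open ProbabilityTheory
open scoped ENNReal Topology

section CriticalSet

variable {f : ℝ → ℝ}

lemma critSet1_subset_Icc : critSet1 f ⊆ Icc 0 1 := fun _ hx => hx.1

lemma differentiableOn_Icc_diff_critSet1 : DifferentiableOn ℝ f (Icc 0 1 \ critSet1 f) := by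
  intro x ⟨hx, hxS⟩
  have hdiff : DifferentiableWithinAt ℝ f (Icc 0 1) x :=
    by_contra fun hndiff => hxS ⟨hx, Or.inl hndiff⟩
  exact hdiff.mono sdiff_subset

lemma HolderOnUnit.continuousOn {α : ℝ} (hα : 0 < α) (hf : HolderOnUnit f α) :
    ContinuousOn f (Icc 0 1) := by
  obtain ⟨C, hC⟩ := hf
  intro x hx
  rw [ContinuousWithinAt, tendsto_iff_dist_tendsto_zero]
  have hmodulus : Filter.Tendsto (fun y => C * |y - x| ^ α) (𝓝[Icc 0 1] x) (𝓝 0) := by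
    have hcont : Continuous fun y => C * |y - x| ^ α :=
      continuous_const.mul ((by fun_prop : Continuous fun y => |y - x|).rpow_const
        fun _ => Or.inr hα.le)
    simpa [Real.zero_rpow hα.ne'] using (hcont.tendsto x).mono_left nhdsWithin_le_nhds
  refine squeeze_zero' (.of_forall fun _ => dist_nonneg) ?_ hmodulus
  filter_upwards [self_mem_nhdsWithin] with y hy
  exact hC y hy x hx

lemma mutuallySingular_map_restrict_critSet1 (hf : AEMeasurable f (volume.restrict (Icc 0 1)))
    {ν : Measure ℝ} (hsing : (volume.restrict (Icc 0 1)).map f ⟂ₘ ν) :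
    (volume.restrict (critSet1 f)).map f ⟂ₘ ν :=
  hsing.mono
    (Measure.map_mono_of_aemeasurable (Measure.restrict_mono_set _ critSet1_subset_Icc) hf) le_rfl

lemma volume_image_critSet1 (hf : AEMeasurable f (volume.restrict (Icc 0 1)))
    (hsing : (volume.restrict (Icc 0 1)).map f ⟂ₘ volume) :
    volume (f '' critSet1 f) = volume (f '' Icc 0 1) := by
  obtain ⟨A, hA, hmapA, hvolA⟩ := hsing
  have hpreimage : volume (f ⁻¹' A ∩ Icc 0 1) = 0 := by
    rwa [Measure.map_apply_of_aemeasurable hf hA, Measure.restrict_apply₀'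
      measurableSet_Icc.nullMeasurableSet] at hmapA
  have hregular : volume (f '' (f ⁻¹' A ∩ (Icc 0 1 \ critSet1 f))) = 0 :=
    addHaar_image_eq_zero_of_differentiableOn_of_addHaar_eq_zero volume
      (differentiableOn_Icc_diff_critSet1.mono inter_subset_right)
      (measure_mono_null (inter_subset_inter_right _ sdiff_subset) hpreimage)
  have hcover : f '' Icc 0 1 ⊆
      f '' critSet1 f ∪ (f '' (f ⁻¹' A ∩ (Icc 0 1 \ critSet1 f)) ∪ Aᶜ) := by
    rintro _ ⟨x, hx, rfl⟩
    by_cases hxS : x ∈ critSet1 f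
    · exact Or.inl (mem_image_of_mem f hxS)
    by_cases hxA : f x ∈ A
    · exact Or.inr (Or.inl (mem_image_of_mem f ⟨hxA, hx, hxS⟩))
    · exact Or.inr (Or.inr hxA)
  refine le_antisymm (measure_mono (image_mono critSet1_subset_Icc)) ?_
  calc volume (f '' Icc 0 1)
      ≤ volume (f '' critSet1 f ∪ (f '' (f ⁻¹' A ∩ (Icc 0 1 \ critSet1 f)) ∪ Aᶜ)) :=
        measure_mono hcover
    _ = volume (f '' critSet1 f) :=
        measure_congr (union_ae_eq_left_of_ae_eq_empty
          (ae_eq_empty.2 (measure_union_null hregular hvolA)))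

end CriticalSet

section MonotonePushforward

variable {f : ℝ → ℝ} {s : Set ℝ}

lemma map_restrict_Ioo_le_of_monotoneOn (hf : MonotoneOn f s) (hs : MeasurableSet s) {p q : ℝ}
    (hp : p ∈ s) (hq : q ∈ s) :
    (volume.restrict s).map f (Ioo (f p) (f q)) ≤ ENNReal.ofReal (q - p) := by
  have hsub : f ⁻¹' Ioo (f p) (f q) ∩ s ⊆ Ioo p q := fun x ⟨⟨hpx, hxq⟩, hx⟩ =>
    ⟨hf.reflect_lt hp hx hpx, hf.reflect_lt hx hq hxq⟩
  rw [Measure.map_apply_of_aemeasurable (aemeasurable_restrict_of_monotoneOn hs hf)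
    measurableSet_Ioo, Measure.restrict_apply₀' hs.nullMeasurableSet, ← Real.volume_Ioo]
  exact measure_mono hsub

lemma abs_sub_le_mul_rpow_of_monotoneOn (hf : MonotoneOn f s) (hs : MeasurableSet s) {α c : ℝ}
    (hα : 0 < α) (hc : 0 < c)
    (hmap : ∀ p ∈ s, ∀ q ∈ s, f p < f q →
      ENNReal.ofReal (c * (f q - f p) ^ α⁻¹) ≤ (volume.restrict s).map f (Ioo (f p) (f q)))
    {p q : ℝ} (hp : p ∈ s) (hq : q ∈ s) :
    |f p - f q| ≤ c⁻¹ ^ α * |p - q| ^ α := by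
  wlog hpq : p ≤ q generalizing p q
  · simpa only [abs_sub_comm] using this hq hp (le_of_not_ge hpq)
  have hfpq : 0 ≤ f q - f p := sub_nonneg.2 (hf hp hq hpq)
  rw [abs_sub_comm, abs_of_nonneg hfpq, abs_sub_comm, abs_of_nonneg (sub_nonneg.2 hpq)]
  rcases hfpq.eq_or_lt with heq | hlt
  · rw [← heq]
    have := sub_nonneg.2 hpq
    positivity
  have hgap : c * (f q - f p) ^ α⁻¹ ≤ q - p :=
    (ENNReal.ofReal_le_ofReal_iff (sub_nonneg.2 hpq)).1
      ((hmap p hp q hq (sub_pos.1 hlt)).trans (map_restrict_Ioo_le_of_monotoneOn hf hs hp hq))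
  calc f q - f p ≤ (c⁻¹ * (q - p)) ^ α :=
        (Real.rpow_inv_le_iff_of_pos hfpq (by positivity) hα).1 ((le_inv_mul_iff₀ hc).2 hgap)
    _ = c⁻¹ ^ α * (q - p) ^ α := Real.mul_rpow (by positivity) (sub_nonneg.2 hpq)

end MonotonePushforward

section Quantile

/-- The quantile function (generalised inverse of the distribution function) of a probability
measure `μ` carried by `[a, b]`. Taking the infimum inside `[a, b]` gives the value `a` for `p ≤ 0`,
where the infimum over all of `ℝ` would be a junk value. -/
def quantileOn (μ : Measure ℝ) (a b p : ℝ) : ℝ := sInf {y ∈ Icc a b | p ≤ cdf μ y}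

variable {μ : Measure ℝ} {a b : ℝ}

lemma bddBelow_cdf_superlevel (p : ℝ) : BddBelow {y ∈ Icc a b | p ≤ cdf μ y} :=
  bddBelow_Icc.mono (sep_subset _ _)

variable [IsProbabilityMeasure μ]

lemma cdf_eq_one_of_ae_mem_Icc (hμ : ∀ᵐ y ∂μ, y ∈ Icc a b) : cdf μ b = 1 := by
  have : μ (Iic b) = 1 := prob_compl_eq_zero_iff measurableSet_Iic |>.1 <|
    measure_mono_null (compl_subset_compl.2 Icc_subset_Iic_self) hμ
  rw [cdf_eq_real, Measure.real, this, ENNReal.toReal_one]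

lemma right_mem_cdf_superlevel (hμ : ∀ᵐ y ∂μ, y ∈ Icc a b) {p : ℝ} (hp : p ≤ 1) :
    b ∈ {y ∈ Icc a b | p ≤ cdf μ y} := by
  obtain ⟨y, hay, hyb⟩ := hμ.exists
  exact ⟨right_mem_Icc.2 (hay.trans hyb), hp.trans (cdf_eq_one_of_ae_mem_Icc hμ).ge⟩

lemma quantileOn_mem_Icc (hμ : ∀ᵐ y ∂μ, y ∈ Icc a b) {p : ℝ} (hp : p ≤ 1) :
    quantileOn μ a b p ∈ Icc a b :=
  ⟨le_csInf ⟨b, right_mem_cdf_superlevel hμ hp⟩ fun _ hy => hy.1.1,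
    csInf_le (bddBelow_cdf_superlevel p) (right_mem_cdf_superlevel hμ hp)⟩

-- The infimum is attained because distribution functions are right-continuous.
lemma le_cdf_quantileOn (hμ : ∀ᵐ y ∂μ, y ∈ Icc a b) {p : ℝ} (hp : p ≤ 1) :
    p ≤ cdf μ (quantileOn μ a b p) := by
  refine ge_of_tendsto (((cdf μ).right_continuous _).mono Ioi_subset_Ici_self) ?_
  filter_upwards [self_mem_nhdsWithin] with y hy
  obtain ⟨z, hz, hzy⟩ := exists_lt_of_csInf_lt ⟨b, right_mem_cdf_superlevel hμ hp⟩ hy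
  exact hz.2.trans (monotone_cdf μ hzy.le)

lemma quantileOn_le_iff (hμ : ∀ᵐ y ∂μ, y ∈ Icc a b) {p y : ℝ} (hp : p ≤ 1) (hy : a ≤ y) :
    quantileOn μ a b p ≤ y ↔ p ≤ cdf μ y := by
  refine ⟨fun h => (le_cdf_quantileOn hμ hp).trans (monotone_cdf μ h), fun h => ?_⟩
  rcases le_total y b with hyb | hby
  · exact csInf_le (bddBelow_cdf_superlevel p) ⟨⟨hy, hyb⟩, h⟩
  · exact (quantileOn_mem_Icc hμ hp).2.trans hby

lemma monotoneOn_quantileOn (hμ : ∀ᵐ y ∂μ, y ∈ Icc a b) :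
    MonotoneOn (quantileOn μ a b) (Iic 1) := fun _ hp _ hq hpq =>
  (quantileOn_le_iff hμ hp (quantileOn_mem_Icc hμ hq).1).2 (hpq.trans (le_cdf_quantileOn hμ hq))

lemma quantileOn_zero (hμ : ∀ᵐ y ∂μ, y ∈ Icc a b) : quantileOn μ a b 0 = a :=
  le_antisymm ((quantileOn_le_iff hμ zero_le_one le_rfl).2 (cdf_nonneg μ a))
    (quantileOn_mem_Icc hμ zero_le_one).1

lemma lt_quantileOn_one (hμ : ∀ᵐ y ∂μ, y ∈ Icc a b) (hpos : 0 < μ (Ioi a)) :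
    a < quantileOn μ a b 1 := by
  by_contra! hle
  have hIic : μ (Iic a) = 1 := by
    rw [← ofReal_cdf, ENNReal.ofReal_eq_one]
    exact le_antisymm (cdf_le_one μ a) ((quantileOn_le_iff hμ le_rfl le_rfl).1 hle)
  rw [← compl_Iic, (prob_compl_eq_zero_iff measurableSet_Iic).2 hIic] at hpos
  exact hpos.false

lemma map_quantileOn (hμ : ∀ᵐ y ∂μ, y ∈ Icc a b) :
    (volume.restrict (Icc 0 1)).map (quantileOn μ a b) = μ := by
  have hmeas : AEMeasurable (quantileOn μ a b) (volume.restrict (Icc 0 1)) :=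
    aemeasurable_restrict_of_monotoneOn measurableSet_Icc
      ((monotoneOn_quantileOn hμ).mono Icc_subset_Iic_self)
  refine Measure.ext_of_Iic _ _ fun y => ?_
  rw [Measure.map_apply_of_aemeasurable hmeas measurableSet_Iic,
    Measure.restrict_apply₀' measurableSet_Icc.nullMeasurableSet]
  rcases lt_or_ge y a with hya | hay
  · have hempty : quantileOn μ a b ⁻¹' Iic y ∩ Icc 0 1 = ∅ :=
      eq_empty_of_forall_notMem fun p ⟨hpy, hp⟩ =>
        (hya.trans_le (quantileOn_mem_Icc hμ hp.2).1).not_ge hpy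
    have hIic : μ (Iic y) = 0 :=
      measure_mono_null (fun z (hzy : z ≤ y) (hz : z ∈ Icc a b) =>
        (hya.trans_le hz.1).not_ge hzy) hμ
    rw [hempty, measure_empty, hIic]
  · have hpreimage : quantileOn μ a b ⁻¹' Iic y ∩ Icc 0 1 = Icc 0 (cdf μ y) := by
      ext p
      constructor
      · exact fun ⟨hpy, hp⟩ => ⟨hp.1, (quantileOn_le_iff hμ hp.2 hay).1 hpy⟩
      · intro ⟨hp0, hpy⟩
        have hp1 : p ≤ 1 := hpy.trans (cdf_le_one μ y)
        exact ⟨(quantileOn_le_iff hμ hp1 hay).2 hpy, hp0, hp1⟩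
    rw [hpreimage, Real.volume_Icc, sub_zero, ofReal_cdf]

end Quantile

section UniformOn

variable {Ω : Type*} [MeasurableSpace Ω] [MeasurableSingletonClass Ω] {s : Set Ω}

lemma inv_encard_le_uniformOn {t : Set Ω} {x : Ω} (hs : s.Finite) (hxs : x ∈ s) (hxt : x ∈ t) :
    (s.encard : ℝ≥0∞)⁻¹ ≤ uniformOn s t := by
  have hone : 1 ≤ Measure.count (s ∩ t) := by
    rw [Measure.count_apply (hs.inter_of_left t).measurableSet]
    have hnonempty : (s ∩ t).Nonempty := ⟨x, hxs, hxt⟩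
    exact_mod_cast one_le_encard_iff_nonempty.2 hnonempty
  rw [uniformOn, cond_apply hs.measurableSet, Measure.count_apply hs.measurableSet]
  exact le_mul_of_one_le_right zero_le hone

lemma mutuallySingular_uniformOn (hs : s.Finite) (ν : Measure Ω) [NullSingletonClass ν] :
    uniformOn s ⟂ₘ ν :=
  ⟨sᶜ, hs.measurableSet.compl, (uniformOn_eq_zero_iff hs).2 (inter_compl_self s), by
    rw [compl_compl]; exact hs.measure_zero ν⟩

end UniformOn

section Grid

/-- The grid of mesh `1 / m` in the unit interval, with both endpoints. -/
def unitGrid (m : ℕ) : Set ℝ := (fun k : ℕ => (k : ℝ) / m) '' Iic m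

lemma finite_unitGrid (m : ℕ) : (unitGrid m).Finite := (finite_Iic m).image _

lemma nonempty_unitGrid (m : ℕ) : (unitGrid m).Nonempty := nonempty_Iic.image _

lemma unitGrid_subset_Icc (m : ℕ) : unitGrid m ⊆ Icc 0 1 := by
  rintro _ ⟨k, hk, rfl⟩
  exact ⟨by positivity, div_le_one_of_le₀ (by exact_mod_cast hk) m.cast_nonneg⟩

lemma encard_unitGrid_le (m : ℕ) : (unitGrid m).encard ≤ m + 1 := by
  refine (encard_image_le _ _).trans ?_
  rw [← Finset.coe_Iic, encard_coe_eq_coe_finsetCard, Nat.card_Iic, Nat.cast_add, Nat.cast_one]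

lemma exists_mem_unitGrid_inter_Ioo {m : ℕ} (hm : 0 < m) {y z : ℝ} (hy : 0 ≤ y) (hz : z ≤ 1)
    (hyz : 1 / (m : ℝ) < z - y) : ∃ x ∈ unitGrid m, x ∈ Ioo y z := by
  have hm' : (0 : ℝ) < m := by exact_mod_cast hm
  have hgap : y * m + 1 < z * m := by
    rw [div_lt_iff₀ hm'] at hyz
    linarith
  have hlower : y * m < ⌊y * m⌋₊ + 1 := Nat.lt_floor_add_one _
  have hupper : (⌊y * m⌋₊ : ℝ) + 1 < z * m := by
    linarith [Nat.floor_le (by positivity : 0 ≤ y * m)]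
  have hk : ⌊y * m⌋₊ + 1 ≤ m := by
    have : (⌊y * m⌋₊ : ℝ) + 1 ≤ m := hupper.le.trans (mul_le_of_le_one_left hm'.le hz)
    exact_mod_cast this
  refine ⟨_, mem_image_of_mem _ hk, ?_, ?_⟩
  · rw [lt_div_iff₀ hm']
    exact_mod_cast hlower
  · rw [div_lt_iff₀ hm']
    exact_mod_cast hupper

end Grid

section DyadicMixture

lemma hasSum_inv_mul_succ : HasSum (fun n : ℕ => (((n : ℝ) + 1) * (n + 2))⁻¹) 1 := by
  have hpartial (N : ℕ) :
      ∑ n ∈ Finset.range N, (((n : ℝ) + 1) * (n + 2))⁻¹ = 1 - 1 / ((N : ℝ) + 1) := by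
    induction N with
    | zero => simp
    | succ N ih =>
      rw [Finset.sum_range_succ, ih]
      push_cast
      field_simp
      ring
  rw [hasSum_iff_tendsto_nat_of_nonneg fun n => by positivity]
  simpa only [hpartial, sub_zero] using tendsto_one_div_add_atTop_nhds_zero_nat.const_sub (1 : ℝ)

/-- The discrete probability measure obtained by drawing a level `n` with probability
`1 / ((n + 1) (n + 2))` and then a uniform point of the grid of mesh `2⁻ⁿ`. The level weights are
summable but decay subexponentially, which is what makes the quantile function Hölder continuous
of every exponent below `1`. -/
def dyadicMixture : Measure ℝ :=
  Measure.sum fun n : ℕ =>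
    ENNReal.ofReal (((n : ℝ) + 1) * (n + 2))⁻¹ • uniformOn (unitGrid (2 ^ n))

instance isProbabilityMeasure_dyadicMixture : IsProbabilityMeasure dyadicMixture where
  measure_univ := by
    have hlevel (n : ℕ) : uniformOn (unitGrid (2 ^ n)) univ = 1 :=
      uniformOn_of_univ (finite_unitGrid _) (nonempty_unitGrid _)
    simp only [dyadicMixture, Measure.sum_apply _ MeasurableSet.univ, Measure.smul_apply, hlevel,
      smul_eq_mul, mul_one]
    rw [← ENNReal.ofReal_tsum_of_nonneg (fun n => by positivity) hasSum_inv_mul_succ.summable,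
      hasSum_inv_mul_succ.tsum_eq, ENNReal.ofReal_one]

lemma ae_mem_Icc_dyadicMixture : ∀ᵐ y ∂dyadicMixture, y ∈ Icc (0 : ℝ) 1 := by
  refine Measure.ae_sum_iff.2 fun n => Measure.ae_smul_measure ?_ _
  refine (uniformOn_eq_zero_iff (finite_unitGrid _)).2 ?_
  exact (disjoint_compl_right_iff_subset.2 (unitGrid_subset_Icc _)).inter_eq

lemma mutuallySingular_dyadicMixture (ν : Measure ℝ) [NullSingletonClass ν] :
    dyadicMixture ⟂ₘ ν :=
  Measure.MutuallySingular.sum_left.2 fun _ =>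
    (mutuallySingular_uniformOn (finite_unitGrid _) ν).smul _

lemma le_dyadicMixture_of_mem_unitGrid {n : ℕ} {s : Set ℝ} {x : ℝ} (hx : x ∈ unitGrid (2 ^ n))
    (hxs : x ∈ s) :
    ENNReal.ofReal (((n : ℝ) + 1) * (n + 2) * (2 ^ n + 1))⁻¹ ≤ dyadicMixture s := by
  have hcard : ((unitGrid (2 ^ n)).encard : ℝ≥0∞) ≤ ENNReal.ofReal (2 ^ n + 1) := by
    have hcast : ENNReal.ofReal (2 ^ n + 1) = (2 ^ n + 1 : ℕ) := by
      rw [← ENNReal.ofReal_natCast]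
      norm_cast
    rw [hcast]
    exact_mod_cast encard_unitGrid_le (2 ^ n)
  calc ENNReal.ofReal (((n : ℝ) + 1) * (n + 2) * (2 ^ n + 1))⁻¹
      = ENNReal.ofReal (((n : ℝ) + 1) * (n + 2))⁻¹ * (ENNReal.ofReal (2 ^ n + 1))⁻¹ := by
        rw [mul_inv, ENNReal.ofReal_mul (by positivity),
          ENNReal.ofReal_inv_of_pos (by positivity : (0 : ℝ) < 2 ^ n + 1)]
    _ ≤ ENNReal.ofReal (((n : ℝ) + 1) * (n + 2))⁻¹ * uniformOn (unitGrid (2 ^ n)) s := by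
        gcongr
        exact (ENNReal.inv_le_inv.2 hcard).trans
          (inv_encard_le_uniformOn (finite_unitGrid _) hx hxs)
    _ ≤ dyadicMixture s := Measure.le_sum
        (fun k : ℕ => ENNReal.ofReal (((k : ℝ) + 1) * (k + 2))⁻¹ • uniformOn (unitGrid (2 ^ k))) n s

lemma dyadicMixture_Ioi_zero_pos : 0 < dyadicMixture (Ioi 0) := by
  refine lt_of_lt_of_le ?_ (le_dyadicMixture_of_mem_unitGrid (n := 0) (x := 1) ?_ ?_)
  · exact ENNReal.ofReal_pos.2 (by positivity)
  · exact ⟨1, by simp, by simp⟩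
  · exact mem_Ioi.2 one_pos

lemma exists_mul_half_pow_rpow_le_inv {β : ℝ} (hβ : 1 < β) : ∃ c : ℝ, 0 < c ∧ ∀ n : ℕ,
    c * ((1 / 2 : ℝ) ^ n) ^ β ≤ (((n : ℝ) + 2) * (n + 3) * (2 ^ (n + 1) + 1))⁻¹ := by
  set r := (1 / 2 : ℝ) ^ (β - 1) with hr
  have hr0 : 0 < r := by positivity
  have hr1 : r < 1 := Real.rpow_lt_one (by norm_num) (by norm_num) (by linarith)
  obtain ⟨B, hB⟩ := (tendsto_pow_const_mul_const_pow_of_lt_one 2 hr0.le hr1).bddAbove_range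
  have hbound (n : ℕ) : ((n : ℝ) + 3) ^ 2 * r ^ (n + 3) ≤ B := by
    exact_mod_cast hB (mem_range_self (n + 3))
  have hB0 : 0 < B := lt_of_lt_of_le (by positivity) (hbound 0)
  refine ⟨r ^ 3 / (3 * B), by positivity, fun n => ?_⟩
  have hsplit : ((1 / 2 : ℝ) ^ n) ^ β = (1 / 2) ^ n * r ^ n := by
    rw [hr, Real.rpow_pow_comm (by norm_num), ← Real.rpow_one_add' (by positivity) (by linarith),
      add_sub_cancel]
  have hhalf : (1 / 2 : ℝ) ^ n * (2 ^ (n + 1) + 1) ≤ 3 := by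
    have : (1 / 2 : ℝ) ^ n * 2 ^ n = 1 := by rw [← mul_pow]; norm_num
    have : (1 / 2 : ℝ) ^ n ≤ 1 := pow_le_one₀ (by norm_num) (by norm_num)
    rw [pow_succ]
    linarith
  rw [hsplit, ← one_div, le_div_iff₀ (by positivity)]
  calc r ^ 3 / (3 * B) * ((1 / 2) ^ n * r ^ n) * (((n : ℝ) + 2) * (n + 3) * (2 ^ (n + 1) + 1))
      = (n + 2) * (n + 3) * r ^ (n + 3) * ((1 / 2) ^ n * (2 ^ (n + 1) + 1)) / (3 * B) := by ring
    _ ≤ (n + 3) * (n + 3) * r ^ (n + 3) * 3 / (3 * B) := by gcongr; norm_num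
    _ ≤ 1 := by
        rw [div_le_one (by positivity)]
        linarith [hbound n]

lemma exists_mul_rpow_le_dyadicMixture_Ioo {β : ℝ} (hβ : 1 < β) : ∃ c : ℝ, 0 < c ∧
    ∀ y z : ℝ, 0 ≤ y → y < z → z ≤ 1 →
      ENNReal.ofReal (c * (z - y) ^ β) ≤ dyadicMixture (Ioo y z) := by
  obtain ⟨c, hc, hlevel⟩ := exists_mul_half_pow_rpow_le_inv hβ
  refine ⟨c, hc, fun y z hy hyz hz => ?_⟩
  obtain ⟨n, hnlt, hnle⟩ := exists_nat_pow_near_of_lt_one (x := z - y) (y := (1 / 2 : ℝ))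
    (by linarith) (by linarith) (by norm_num) (by norm_num)
  obtain ⟨x, hxgrid, hx⟩ := exists_mem_unitGrid_inter_Ioo (m := 2 ^ (n + 1)) (by positivity) hy hz
    (by simpa only [one_div, inv_pow, Nat.cast_pow, Nat.cast_ofNat] using hnlt)
  refine (ENNReal.ofReal_le_ofReal ?_).trans (le_dyadicMixture_of_mem_unitGrid hxgrid hx)
  calc c * (z - y) ^ β ≤ c * ((1 / 2 : ℝ) ^ n) ^ β := by
        gcongr
    _ ≤ (((n : ℝ) + 2) * (n + 3) * (2 ^ (n + 1) + 1))⁻¹ := hlevel n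
    _ = _ := by push_cast; ring_nf

lemma holderOnUnit_quantileOn_dyadicMixture {α : ℝ} (hα : α ∈ Ioo (0 : ℝ) 1) :
    HolderOnUnit (quantileOn dyadicMixture 0 1) α := by
  obtain ⟨c, hc, hlower⟩ :=
    exists_mul_rpow_le_dyadicMixture_Ioo ((one_lt_inv₀ hα.1).2 hα.2)
  have hmem {p : ℝ} (hp : p ∈ Icc (0 : ℝ) 1) : quantileOn dyadicMixture 0 1 p ∈ Icc (0 : ℝ) 1 :=
    quantileOn_mem_Icc ae_mem_Icc_dyadicMixture hp.2
  refine ⟨c⁻¹ ^ α, fun x hx y hy => abs_sub_le_mul_rpow_of_monotoneOn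
    ((monotoneOn_quantileOn ae_mem_Icc_dyadicMixture).mono Icc_subset_Iic_self)
    measurableSet_Icc hα.1 hc (fun p hp q hq hpq => ?_) hx hy⟩
  rw [map_quantileOn ae_mem_Icc_dyadicMixture]
  exact hlower _ _ (hmem hp).1 hpq (hmem hq).2

end DyadicMixture

/-- There exists `f : [0,1] → ℝ` Hölder continuous of every exponent `α ∈ (0,1)` which does
not have the strong Sard property (`L¹(f(S)) > 0`), but has the relaxed Sard property
(`f_#(𝟙_S L¹) ⊥ L¹`). -/
theorem exists_holder_relaxedSard_not_strongSard :
    ∃ f : ℝ → ℝ,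
      (∀ α ∈ Set.Ioo (0:ℝ) 1, HolderOnUnit f α) ∧
      0 < volume (f '' critSet1 f) ∧
      (Measure.map f (volume.restrict (critSet1 f))).MutuallySingular volume := by
  set f := quantileOn dyadicMixture 0 1
  have hholder : ∀ α ∈ Ioo (0 : ℝ) 1, HolderOnUnit f α := fun _ =>
    holderOnUnit_quantileOn_dyadicMixture
  have hcont : ContinuousOn f (Icc 0 1) :=
    (hholder (1 / 2) ⟨by norm_num, by norm_num⟩).continuousOn (by norm_num)
  have hmeas : AEMeasurable f (volume.restrict (Icc 0 1)) := hcont.aemeasurable measurableSet_Icc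
  have hsing : (volume.restrict (Icc 0 1)).map f ⟂ₘ volume := by
    rw [map_quantileOn ae_mem_Icc_dyadicMixture]
    exact mutuallySingular_dyadicMixture volume
  have hlt : f 0 < f 1 :=
    calc f 0 = 0 := quantileOn_zero ae_mem_Icc_dyadicMixture
      _ < f 1 := lt_quantileOn_one ae_mem_Icc_dyadicMixture dyadicMixture_Ioi_zero_pos
  refine ⟨f, hholder, ?_, mutuallySingular_map_restrict_critSet1 hmeas hsing⟩
  calc 0 < volume (Icc (f 0) (f 1)) := by simpa using hlt
    _ ≤ volume (f '' Icc 0 1) := measure_mono (intermediate_value_Icc zero_le_one hcont)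
    _ = volume (f '' critSet1 f) := (volume_image_critSet1 hmeas hsing).symm
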